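/- Let R be a commutative ring such that the maximal spectrum Specm(R) (the subspace of Spec(R) consisting of maximal ideals) is a noetherian topological space and can be written as a union of finitely many subspaces X₁, …, X_N each of topological Krull dimension at most d. Then for every r ≥ d + 2 the elementary group E_r(R) acts transitively on the set of unimodular rows of length r: for every unimodular row (a₁,…,a_r) ∈ Rʳ there exists ε ∈ E_r(R) such that (a₁,…,a_r)·ε = (1,0,…,0). -/

import Mathlib

open Matrix

/-- The elementary subgroup `E_r(R) ⊆ SL_r(R)`: the subgroup generated by the elementary
matrices `e_{ij}(a) = 1 + a·E_{ij}` for `i ≠ j` and `a ∈ R`. -/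
def elementarySubgroup (r : ℕ) (R : Type*) [CommRing R] :
    Subgroup (SpecialLinearGroup (Fin r) R) :=
  Subgroup.closure {σ | ∃ (i j : Fin r) (a : R), i ≠ j ∧
    (σ : Matrix (Fin r) (Fin r) R) = Matrix.transvection i j a}

open TopologicalSpace Topology in
lemma dim_drop {Y : Type*} [TopologicalSpace Y] [NoetherianSpace Y] (k : ℕ)
    (h : topologicalKrullDim Y < ((k + 1 : ℕ) : WithBot ℕ∞)) :
    ∃ S : Set Y, S.Finite ∧ ∀ (Z : Type _) [TopologicalSpace Z] (f : Z → Y), IsInducing f →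
      Disjoint (closure (Set.range f)) S → topologicalKrullDim Z < (k : WithBot ℕ∞) := by
  classical
  have hfin := NoetherianSpace.finite_irreducibleComponents (α := Y)
  have hne : ∀ C : irreducibleComponents Y, ∃ y : Y, y ∈ C.1 := fun C => C.2.1.nonempty
  choose g hg using hne
  have := hfin.to_subtype
  refine ⟨Set.range g, Set.finite_range g, fun Z _ f hf hdis => ?_⟩
  by_contra hcon
  rw [not_lt, topologicalKrullDim, Order.le_krullDim_iff] at hcon
  obtain ⟨l, hl⟩ := hcon
  let l' := l.map _ (IrreducibleCloseds.map_strictMono_of_isInducing hf)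
  obtain ⟨C, hC, hsub⟩ := exists_mem_irreducibleComponents_subset_of_isIrreducible
    (l'.last : Set Y) l'.last.2
  let C' : IrreducibleCloseds Y := ⟨C, hC.1, isClosed_of_mem_irreducibleComponents C hC⟩
  have hle : l'.last < C' := by
    refine lt_of_le_not_ge hsub fun hge => ?_
    have h1 : g ⟨C, hC⟩ ∈ (l'.last : Set Y) := hge (hg ⟨C, hC⟩)
    have h2 : (l'.last : Set Y) ⊆ closure (Set.range f) := by
      have : l'.last = IrreducibleCloseds.map f hf.continuous l.last := rfl
      rw [this, IrreducibleCloseds.coe_map]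
      exact closure_mono (Set.image_subset_range _ _)
    exact Set.disjoint_left.1 hdis (h2 h1) ⟨_, rfl⟩
  refine absurd h (not_lt.2 ?_)
  rw [topologicalKrullDim, Order.le_krullDim_iff]
  exact ⟨l'.snoc C' hle, by simp [l', hl]⟩

lemma avoid_points {R : Type*} [CommRing R]
    (S : Set {p : PrimeSpectrum R // p.asIdeal.IsMaximal}) (hS : S.Finite) (s a : R)
    (hs : ∀ m ∈ S, s ∉ m.1.asIdeal) : ∃ b : R, ∀ m ∈ S, a + b * s ∉ m.1.asIdeal := by
  classical
  have := hS.to_subtype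
  have hco : Pairwise (Function.onFun IsCoprime fun m : S => m.1.1.asIdeal) := by
    intro m n hmn
    have := m.1.2
    have := n.1.2
    refine Ideal.isCoprime_of_isMaximal fun h => hmn ?_
    exact Subtype.ext (Subtype.ext (PrimeSpectrum.ext h))
  obtain ⟨b, hb⟩ := Ideal.exists_forall_sub_mem_ideal hco
    (fun m : S => if a ∈ m.1.1.asIdeal then (1 : R) else 0)
  refine ⟨b, fun m hm hmem => ?_⟩
  have hbm := hb ⟨m, hm⟩
  have hp := m.1.2
  by_cases h : a ∈ m.1.asIdeal
  · simp only [h, if_true] at hbm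
    have h1 : b * s ∈ m.1.asIdeal := by simpa using Ideal.sub_mem _ hmem h
    have h2 : s ∈ m.1.asIdeal := by
      have := Ideal.sub_mem _ h1 (Ideal.mul_mem_right s _ hbm)
      convert this using 1
      ring
    exact hs m hm h2
  · simp only [h, if_false, sub_zero] at hbm
    exact h (by simpa using Ideal.sub_mem _ hmem (Ideal.mul_mem_right s _ hbm))

open TopologicalSpace Topology in
lemma stable_range_aux {R : Type*} [CommRing R]
    [NoetherianSpace {p : PrimeSpectrum R // p.asIdeal.IsMaximal}] (N : ℕ) (s : R) (k : ℕ) :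
    ∀ (Y : Fin N → Set {p : PrimeSpectrum R // p.asIdeal.IsMaximal})
      (_ : ∀ i, ∀ m ∈ Y i, s ∉ m.1.asIdeal)
      (_ : ∀ i, topologicalKrullDim ↥(Y i) < (k : WithBot ℕ∞)) (a : Fin k → R),
      ∃ b : Fin k → R, ∀ i, ∀ m ∈ Y i, ∃ j, a j + b j * s ∉ m.1.asIdeal := by
  induction k with
  | zero =>
    intro Y _ hd a
    refine ⟨a, fun i m hm => ?_⟩
    have h := hd i
    rw [topologicalKrullDim, Nat.cast_zero, ← not_le, Order.krullDim_nonneg_iff] at h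
    exact absurd ⟨⟨closure {⟨m, hm⟩}, isIrreducible_singleton.closure, isClosed_closure⟩⟩ h
  | succ k ih =>
    intro Y hs hd a
    choose S hSf hS using fun i => dim_drop k (hd i)
    obtain ⟨b0, hb0⟩ := avoid_points (⋃ i, Subtype.val '' S i)
      (Set.finite_iUnion fun i => (hSf i).image _) s (a 0) (by
        intro m hm
        obtain ⟨i, ⟨y, hy, rfl⟩⟩ := Set.mem_iUnion.1 hm
        exact hs i _ y.2)
    let F : Set {p : PrimeSpectrum R // p.asIdeal.IsMaximal} :=
      {m | a 0 + b0 * s ∈ m.1.asIdeal}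
    have hF : IsClosed F := by
      have : F = Subtype.val ⁻¹' (PrimeSpectrum.zeroLocus {a 0 + b0 * s}) := by
        ext m; simp [F, PrimeSpectrum.mem_zeroLocus]
      rw [this]
      exact (PrimeSpectrum.isClosed_zeroLocus _).preimage continuous_subtype_val
    obtain ⟨b, hb⟩ := ih (fun i => Y i ∩ F) (fun i m hm => hs i m hm.1) (fun i => by
      refine hS i _ (Set.inclusion Set.inter_subset_left)
        ((Topology.IsEmbedding.inclusion _).isInducing) ?_
      have hcl : IsClosed (Subtype.val ⁻¹' F : Set (Y i)) := hF.preimage continuous_subtype_val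
      refine Set.disjoint_left.2 fun y hy hyS => ?_
      have hyF : y ∈ (Subtype.val ⁻¹' F : Set (Y i)) := by
        refine closure_minimal ?_ hcl hy
        rintro _ ⟨z, rfl⟩
        exact z.2.2
      exact hb0 y.1 (Set.mem_iUnion.2 ⟨i, y, hyS, rfl⟩) hyF) (fun j => a j.succ)
    refine ⟨Fin.cons b0 b, fun i m hm => ?_⟩
    by_cases hmF : m ∈ F
    · obtain ⟨j, hj⟩ := hb i m ⟨hm, hmF⟩
      exact ⟨j.succ, by simpa using hj⟩
    · exact ⟨0, by simpa [F] using hmF⟩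

/-- `w` is obtained from `v` by an elementary matrix. -/
def ElemRel {R : Type*} [CommRing R] {r : ℕ} (v w : Fin r → R) : Prop :=
  ∃ ε ∈ elementarySubgroup r R, Matrix.vecMul v (ε : Matrix (Fin r) (Fin r) R) = w

section
variable {R : Type*} [CommRing R] {r : ℕ}

lemma ElemRel.refl' (v : Fin r → R) : ElemRel v v := ⟨1, one_mem _, by simp⟩

lemma ElemRel.trans' {u v w : Fin r → R} (h : ElemRel u v) (h' : ElemRel v w) : ElemRel u w := by
  obtain ⟨e, he, rfl⟩ := h
  obtain ⟨f, hf, rfl⟩ := h'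
  exact ⟨e * f, mul_mem he hf, by simp [Matrix.vecMul_vecMul]⟩

lemma ElemRel.step (v : Fin r → R) {i j : Fin r} (hij : i ≠ j) (c : R) :
    ElemRel v (Function.update v j (v j + c * v i)) := by
  refine ⟨Matrix.SpecialLinearGroup.transvection hij c,
    Subgroup.subset_closure ⟨i, j, c, hij, rfl⟩, ?_⟩
  rw [Matrix.SpecialLinearGroup.transvection_coe, Matrix.vecMul_add, Matrix.vecMul_one]
  ext l
  by_cases hl : l = j
  · subst hl
    simp [Matrix.vecMul, dotProduct, Matrix.single_apply, mul_comm]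
  · have hl' : j ≠ l := fun h => hl h.symm
    simp [Matrix.vecMul, dotProduct, Matrix.single_apply, hl, hl']

lemma ElemRel.spread (v : Fin r → R) (i : Fin r) (b : Fin r → R) (T : Finset (Fin r))
    (hT : i ∉ T) : ElemRel v (fun j => if j ∈ T then v j + b j * v i else v j) := by
  induction T using Finset.induction_on with
  | empty => simpa using ElemRel.refl' v
  | insert x T hx ih =>
    simp only [Finset.mem_insert, not_or] at hT
    refine (ih hT.2).trans' ?_
    convert ElemRel.step _ hT.1 (b x) using 1
    ext l
    by_cases hl : l = x
    · subst hl; simp [hx, hT.2]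
    · simp [hl]

lemma ElemRel.gather (v : Fin r → R) (j : Fin r) (c : Fin r → R) (T : Finset (Fin r))
    (hT : j ∉ T) : ElemRel v (Function.update v j (v j + ∑ i ∈ T, c i * v i)) := by
  induction T using Finset.induction_on with
  | empty => simpa using ElemRel.refl' v
  | insert x T hx ih =>
    simp only [Finset.mem_insert, not_or] at hT
    refine (ih hT.2).trans' ?_
    convert ElemRel.step _ (Ne.symm hT.1) (c x) using 1
    ext l
    by_cases hl : l = j
    · subst hl
      rw [Finset.sum_insert hx]
      simp [Ne.symm hT.1]
      ring
    · simp [hl]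
end

/-- If the maximal spectrum of `R` is a noetherian topological space covered by finitely many
subspaces of topological Krull dimension at most `d`, then for `r ≥ d + 2` the elementary group
`E_r(R)` acts transitively on unimodular rows of length `r`: every unimodular row can be moved
to `(1, 0, …, 0)` by an elementary matrix. -/
theorem stmt17 (R : Type*) [CommRing R] (d N : ℕ)
    (hnoeth : TopologicalSpace.NoetherianSpace {p : PrimeSpectrum R // p.asIdeal.IsMaximal})
    (X : Fin N → Set {p : PrimeSpectrum R // p.asIdeal.IsMaximal})
    (hcover : (⋃ i, X i) = Set.univ)
    (hdim : ∀ i, topologicalKrullDim ↥(X i) ≤ ((d : ℕ∞) : WithBot ℕ∞))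
    (r : ℕ) (hr : d + 2 ≤ r)
    (a : Fin r → R) (ha : Ideal.span (Set.range a) = ⊤) :
    ∃ ε ∈ elementarySubgroup r R, ∀ i : Fin r,
      Matrix.vecMul a (ε : Matrix (Fin r) (Fin r) R) i = if (i : ℕ) = 0 then 1 else 0 := by
  suffices h : ElemRel a (fun i : Fin r => if (i : ℕ) = 0 then 1 else 0) by
    obtain ⟨e, he, h⟩ := h
    exact ⟨e, he, fun i => congrFun h i⟩
  obtain ⟨n, rfl⟩ : ∃ n, r = n + 1 := ⟨r - 1, by omega⟩
  have hdn : d < n := by omega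
  obtain ⟨b, hb⟩ := stable_range_aux N (a (Fin.last n)) n
    (fun i => X i ∩ {m | a (Fin.last n) ∉ m.1.asIdeal}) (fun i m hm => hm.2) (fun i => by
      refine lt_of_le_of_lt (le_trans ?_ (hdim i)) ?_
      · exact (Topology.IsEmbedding.inclusion Set.inter_subset_left).isInducing.topologicalKrullDim_le
      · exact_mod_cast hdn) (fun j => a j.castSucc)
  -- the shortened row is unimodular
  have huni : Ideal.span (Set.range fun j : Fin n => a j.castSucc + b j * a (Fin.last n)) = ⊤ := by
    by_contra hne
    obtain ⟨m, hm, hle⟩ := Ideal.exists_le_maximal _ hne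
    have hmem : ∀ j : Fin n, a j.castSucc + b j * a (Fin.last n) ∈ m := fun j =>
      hle (Ideal.subset_span ⟨j, rfl⟩)
    let M : {p : PrimeSpectrum R // p.asIdeal.IsMaximal} := ⟨⟨m, hm.isPrime⟩, hm⟩
    by_cases hl : a (Fin.last n) ∈ m
    · refine hm.ne_top (top_le_iff.1 (ha ▸ Ideal.span_le.2 ?_))
      rintro _ ⟨j, rfl⟩
      refine Fin.lastCases hl (fun j => ?_) j
      simpa using Ideal.sub_mem _ (hmem j) (Ideal.mul_mem_left m (b j) hl)
    · obtain ⟨i, hi⟩ := Set.mem_iUnion.1 (hcover ▸ Set.mem_univ M : M ∈ ⋃ i, X i)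
      obtain ⟨j, hj⟩ := hb i M ⟨hi, hl⟩
      exact hj (hmem j)
  obtain ⟨e, he⟩ := (Ideal.mem_span_range_iff_exists_fun).1
    (huni ▸ Submodule.mem_top : (1 : R) ∈ Ideal.span
      (Set.range fun j : Fin n => a j.castSucc + b j * a (Fin.last n)))
  have h0 : (0 : Fin (n + 1)) ≠ Fin.last n := by
    intro h
    have := congrArg Fin.val h
    simp at this
    omega
  -- Step 1
  have s1 := ElemRel.spread a (Fin.last n) (Fin.snoc (α := fun _ => R) b 0)
    (Finset.univ.erase (Fin.last n)) (by simp)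
  refine s1.trans' ?_
  set v : Fin (n + 1) → R := fun j => if j ∈ Finset.univ.erase (Fin.last n) then
    a j + (Fin.snoc (α := fun _ => R) b 0 : Fin (n + 1) → R) j * a (Fin.last n) else a j with hv
  have hvc : ∀ j : Fin n, v j.castSucc = a j.castSucc + b j * a (Fin.last n) := by
    intro j
    have : j.castSucc ≠ Fin.last n := Fin.castSucc_ne_last j
    simp [hv, this]
  have hsum : ∑ i ∈ Finset.univ.erase (Fin.last n),
      ((1 - v 0 - v (Fin.last n)) * (Fin.snoc (α := fun _ => R) e 0 : Fin (n + 1) → R) i) * v i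
        = 1 - v 0 - v (Fin.last n) := by
    have h1 : ∑ i, (Fin.snoc (α := fun _ => R) e 0 : Fin (n + 1) → R) i * v i = 1 := by
      rw [Fin.sum_univ_castSucc]
      simp [hvc, he]
    rw [Finset.sum_erase _ (by simp)]
    simp_rw [mul_assoc]
    rw [← Finset.mul_sum, h1, mul_one]
  -- Step 2
  refine (ElemRel.gather v (Fin.last n) (fun i => (1 - v 0 - v (Fin.last n)) *
    (Fin.snoc (α := fun _ => R) e 0 : Fin (n + 1) → R) i) (Finset.univ.erase (Fin.last n))
      (by simp)).trans' ?_
  rw [hsum]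
  -- Step 3
  refine (ElemRel.step _ h0.symm 1).trans' ?_
  set w : Fin (n + 1) → R := Function.update (Function.update v (Fin.last n)
    (v (Fin.last n) + (1 - v 0 - v (Fin.last n)))) 0 _ with hw
  have hw0 : w 0 = 1 := by simp [hw, h0]
  -- Step 4
  convert ElemRel.spread w 0 (fun j => - w j) (Finset.univ.erase 0) (by simp) using 1
  ext j
  by_cases hj : j = 0
  · subst hj; simp [hw0]
  · have : (j : ℕ) ≠ 0 := fun h => hj (Fin.ext h)
    simp [hj, hw0]
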